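/- arXiv:2209.00532 — 3 statements merged into one kernel-verified Lean document; each statement's English description precedes it below -/
import Mathlib

section
/- Let γ ∈ [0,1], m > 0, and let r, q, q′, Q, Q′ ∈ ℝ satisfy the Bellman equation Q = r + γ·Q′, with TD error δ = r + γ·q′ − q. Let v, v′ ∈ ℝⁿ with ‖v‖ ≥ m and ‖v′‖ ≥ m, and define the approximate policy gradients g = q·v, g′ = q′·v′ and the true policy gradients g_true = Q·v, g′_true = Q′·v′ at the current and next state-action pairs. Then max(‖g − g_true‖, ‖g′ − g′_true‖) ≥ m·|δ|/(1 + γ); that is, the divergence of the approximate from the true policy gradient at the current or the subsequent transition is bounded below by a positive multiple of the absolute TD error. -/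
/-- The divergence of the approximate from the true policy gradient at the
current or the subsequent transition is bounded below by a positive multiple
of the absolute TD error. -/
theorem policy_gradient_divergence_lower_bound (n : ℕ) (γ m : ℝ)
    (hγ0 : 0 ≤ γ) (hγ1 : γ ≤ 1) (hm : 0 < m)
    (r q q' Q Q' δ : ℝ)
    (hBellman : Q = r + γ * Q') (hδ : δ = r + γ * q' - q)
    (v v' : EuclideanSpace ℝ (Fin n)) (hv : m ≤ ‖v‖) (hv' : m ≤ ‖v'‖) :
    max ‖q • v - Q • v‖ ‖q' • v' - Q' • v'‖ ≥ m * |δ| / (1 + γ) := by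
  rw [← sub_smul, ← sub_smul, norm_smul, norm_smul, Real.norm_eq_abs, Real.norm_eq_abs]
  have hd : δ = γ * (q' - Q') - (q - Q) := by rw [hδ, hBellman]; ring
  have habs : |δ| ≤ γ * |q' - Q'| + |q - Q| := by
    rw [hd]
    refine (abs_sub _ _).trans ?_
    rw [abs_mul, abs_of_nonneg hγ0]
  have h1 : |q - Q| * m ≤ max (|q - Q| * ‖v‖) (|q' - Q'| * ‖v'‖) :=
    (mul_le_mul_of_nonneg_left hv (abs_nonneg _)).trans (le_max_left _ _)
  have h2 : |q' - Q'| * m ≤ max (|q - Q| * ‖v‖) (|q' - Q'| * ‖v'‖) :=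
    (mul_le_mul_of_nonneg_left hv' (abs_nonneg _)).trans (le_max_right _ _)
  have h3 := mul_le_mul_of_nonneg_left h2 hγ0
  have h4 := mul_le_mul_of_nonneg_left habs hm.le
  rw [ge_iff_le, div_le_iff₀ (by linarith)]
  linarith
end

section
/- Let N be a positive natural number, let δ : Fin N → ℝ with δ i ≠ 0 for all i, let α, β, ρ ∈ ℝ, set S = ∑ⱼ |δ j|^α, p i = |δ i|^α / S, and w i = (N · p i)^(−β). Then the expected gradient of the loss L(δ) = |δ|^ρ/ρ under prioritized sampling with importance weights satisfies ∑ᵢ p i · w i · sign(δ i) · |δ i|^(ρ−1) = N^(−β) · S^(β−1) · ∑ᵢ sign(δ i) · |δ i|^(ρ−1+α−αβ). In particular, if ρ + α − αβ = 2, this equals N^(−β) · S^(β−1) · ∑ᵢ δ i, a positive multiple of the uniformly sampled expected MSE gradient (1/N) ∑ᵢ δ i, so the PER objective is unbiased exactly when the exponent condition ρ + α − αβ = 2 holds. -/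
/-- The expected gradient of the loss `|δ|^ρ/ρ` under PER prioritized sampling
with importance weights equals `N^(−β) * S^(β−1)` times the sum of
`sign(δ i) * |δ i|^(ρ−1+α−αβ)`; in particular, when `ρ + α − αβ = 2` it is a
positive multiple of the uniformly sampled expected MSE gradient, i.e. the PER
objective is unbiased exactly under this exponent condition. -/
theorem per_expected_gradient (N : ℕ) (hN : 0 < N)
    (δ : Fin N → ℝ) (hδ : ∀ i, δ i ≠ 0) (α β ρ : ℝ)
    (S : ℝ) (hS : S = ∑ j, |δ j| ^ α)
    (p : Fin N → ℝ) (hp : ∀ i, p i = |δ i| ^ α / S)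
    (w : Fin N → ℝ) (hw : ∀ i, w i = ((N : ℝ) * p i) ^ (-β)) :
    (∑ i, p i * w i * (Real.sign (δ i) * |δ i| ^ (ρ - 1))
        = (N : ℝ) ^ (-β) * S ^ (β - 1)
            * ∑ i, Real.sign (δ i) * |δ i| ^ (ρ - 1 + α - α * β)) ∧
      (ρ + α - α * β = 2 →
        ∑ i, p i * w i * (Real.sign (δ i) * |δ i| ^ (ρ - 1))
          = (N : ℝ) ^ (-β) * S ^ (β - 1) * ∑ i, δ i) := by
  have hSpos : 0 < S := by
    rw [hS]
    exact Finset.sum_pos (fun j _ => Real.rpow_pos_of_pos (abs_pos.mpr (hδ j)) α)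
      ⟨⟨0, hN⟩, Finset.mem_univ _⟩
  have hNpos : (0 : ℝ) < N := by exact_mod_cast hN
  have main : ∑ i, p i * w i * (Real.sign (δ i) * |δ i| ^ (ρ - 1))
        = (N : ℝ) ^ (-β) * S ^ (β - 1)
            * ∑ i, Real.sign (δ i) * |δ i| ^ (ρ - 1 + α - α * β) := by
    rw [Finset.mul_sum]
    refine Finset.sum_congr rfl fun i _ => ?_
    have hd : 0 < |δ i| := abs_pos.mpr (hδ i)
    have ha : 0 < |δ i| ^ α := Real.rpow_pos_of_pos hd α
    have e1 : |δ i| ^ (ρ - 1 + α - α * β)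
        = |δ i| ^ (ρ - 1) * |δ i| ^ α * |δ i| ^ (α * -β) := by
      rw [← Real.rpow_add hd, ← Real.rpow_add hd]
      congr 1
      ring
    have e2 : (S : ℝ) ^ (β - 1) = S ^ β / S := by
      rw [Real.rpow_sub hSpos, Real.rpow_one]
    have e3 : w i = (N : ℝ) ^ (-β) * (|δ i| ^ (α * -β) * S ^ β) := by
      rw [hw, hp, Real.mul_rpow hNpos.le (div_pos ha hSpos).le,
        Real.div_rpow ha.le hSpos.le, ← Real.rpow_mul hd.le, Real.rpow_neg hSpos.le β,
        div_inv_eq_mul]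
    rw [e1, e2, e3, hp]
    ring
  refine ⟨main, fun h => ?_⟩
  rw [main]
  congr 1
  refine Finset.sum_congr rfl fun i _ => ?_
  have h1 : ρ - 1 + α - α * β = 1 := by linarith
  rw [h1, Real.rpow_one]
  rcases lt_or_gt_of_ne (hδ i) with hneg | hpos
  · rw [Real.sign_of_neg hneg, abs_of_neg hneg]
    ring
  · rw [Real.sign_of_pos hpos, abs_of_pos hpos]
    ring
end

section
/- Let N be a positive natural number, α > 0, and δ : Fin N → ℝ. Set Mᵢ = max(|δ i|^α, 1), S = ∑ⱼ Mⱼ, LAP sampling probabilities p i = Mᵢ/S, and PAL normalizer ξ = S/N. Define the Huber gradient (κ = 1) by h(d) = d if |d| ≤ 1 and h(d) = sign(d) otherwise, and the PAL gradient by g(d) = (1/ξ)·d if |d| ≤ 1 and g(d) = (1/ξ)·sign(d)·|d|^α otherwise. Then the expected Huber gradient under LAP prioritized sampling equals the expected PAL gradient under uniform sampling: ∑ᵢ p i · h(δ i) = (1/N) · ∑ᵢ g(δ i). -/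
/-- The expected Huber gradient (κ = 1) under LAP prioritized sampling equals
the expected PAL gradient under uniform sampling. -/
theorem lap_pal_same_expected_gradient (N : ℕ) (hN : 0 < N) (α : ℝ) (hα : 0 < α)
    (δ : Fin N → ℝ)
    (S : ℝ) (hS : S = ∑ j, max (|δ j| ^ α) 1)
    (p : Fin N → ℝ) (hp : ∀ i, p i = max (|δ i| ^ α) 1 / S)
    (ξ : ℝ) (hξ : ξ = S / N) :
    ∑ i, p i * (if |δ i| ≤ 1 then δ i else Real.sign (δ i))
      = (1 / N) * ∑ i, (if |δ i| ≤ 1 then (1 / ξ) * δ i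
          else (1 / ξ) * Real.sign (δ i) * |δ i| ^ α) := by
  have hN' : (N : ℝ) ≠ 0 := by exact_mod_cast hN.ne'
  have hSpos : 0 < S := by
    rw [hS]
    haveI : Nonempty (Fin N) := ⟨⟨0, hN⟩⟩
    exact Finset.sum_pos (fun j _ => lt_of_lt_of_le one_pos (le_max_right _ _))
      Finset.univ_nonempty
  have hS0 : S ≠ 0 := hSpos.ne'
  rw [Finset.mul_sum]
  refine Finset.sum_congr rfl fun i _ => ?_
  rw [hp i, hξ]
  split_ifs with h
  · rw [max_eq_right (Real.rpow_le_one (abs_nonneg _) h hα.le)]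
    field_simp
  · rw [max_eq_left (Real.one_le_rpow (not_le.mp h).le hα.le)]
    field_simp
end
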